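/- arXiv:1711.10808 — 2 statements merged into one kernel-verified Lean document; each statement's English description precedes it below -/
import Mathlib

section
/- Let M₁, M₂ be positive integers and ℓ₁, ℓ₂ integers with 1 ≤ ℓ₁ ≤ M₁, 1 ≤ ℓ₂ ≤ M₂. There is a constant C (depending at most on M₁, M₂) such that for all real x ≥ 1, |Δ(M₁M₂x; ℓ₁,M₁,ℓ₂,M₂) + Σ_{n₁ ≤ √(M₁M₂x), n₁ ≡ ℓ₁ (mod M₁)} ψ̃(M₁x/n₁ − ℓ₂/M₂) + Σ_{n₂ ≤ √(M₁M₂x), n₂ ≡ ℓ₂ (mod M₂)} ψ̃(M₂x/n₂ − ℓ₁/M₁)| ≤ C. -/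
open Real MeasureTheory Finset
open scoped Classical

noncomputable section

/-- The divisor function with congruence conditions: the number of factorizations
`n = n₁ n₂` with `n₁ ≡ ℓ₁ (mod M₁)` and `n₂ ≡ ℓ₂ (mod M₂)`. -/
def dCong (M₁ M₂ ℓ₁ ℓ₂ n : ℕ) : ℕ :=
  ((Nat.divisorsAntidiagonal n).filter
    (fun p => p.1 % M₁ = ℓ₁ % M₁ ∧ p.2 % M₂ = ℓ₂ % M₂)).card

/-- The digamma function `ψ₀ = Γ′/Γ`. -/
def digamma (x : ℝ) : ℝ := deriv Real.Gamma x / Real.Gamma x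

/-- The error term `Δ(M₁M₂x; ℓ₁,M₁,ℓ₂,M₂)`. -/
def Δerr (M₁ M₂ ℓ₁ ℓ₂ : ℕ) (x : ℝ) : ℝ :=
  (∑ n ∈ Finset.Icc 1 ⌊(M₁ * M₂ : ℕ) * x⌋₊, (dCong M₁ M₂ ℓ₁ ℓ₂ n : ℝ))
    - x * (Real.log x - 1 - digamma ((ℓ₁ : ℝ) / M₁) - digamma ((ℓ₂ : ℝ) / M₂))
    - (1/2 - (ℓ₁ : ℝ) / M₁) * (1/2 - (ℓ₂ : ℝ) / M₂)

lemma gamma_diff {y : ℝ} (hy : 0 < y) : DifferentiableAt ℝ Real.Gamma y := by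
  apply Real.differentiableAt_Gamma
  intro m h
  have : (0:ℝ) ≤ m := by positivity
  linarith

lemma digamma_hasDeriv {y : ℝ} (hy : 0 < y) :
    HasDerivAt (Real.log ∘ Real.Gamma) (digamma y) y :=
  (gamma_diff hy).hasDerivAt.log (Real.Gamma_pos_of_pos hy).ne'

lemma digamma_add_one {y : ℝ} (hy : 0 < y) : digamma (y + 1) = digamma y + 1 / y := by
  have h1 : HasDerivAt (fun t => Real.log (Real.Gamma (t + 1))) (digamma (y + 1)) y :=
    HasDerivAt.comp_add_const y 1 (digamma_hasDeriv (by linarith : 0 < y + 1))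
  have h2 : HasDerivAt (fun t => Real.log t + Real.log (Real.Gamma t)) (y⁻¹ + digamma y) y :=
    (Real.hasDerivAt_log hy.ne').add (digamma_hasDeriv hy)
  have h3 : (fun t => Real.log (Real.Gamma (t + 1))) =ᶠ[nhds y]
      (fun t => Real.log t + Real.log (Real.Gamma t)) := by
    filter_upwards [lt_mem_nhds hy] with t ht
    rw [Real.Gamma_add_one ht.ne', Real.log_mul ht.ne' (Real.Gamma_pos_of_pos ht).ne']
  have := (h2.congr_of_eventuallyEq h3).unique h1
  rw [← this, one_div]; ring

lemma digamma_bounds {y : ℝ} (hy : 0 < y) :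
    digamma y ≤ Real.log y ∧ Real.log y ≤ digamma y + 1 / y := by
  have hs : slope (Real.log ∘ Real.Gamma) y (y+1) = Real.log y := by
    rw [slope_def_field]
    simp only [Function.comp]
    rw [Real.Gamma_add_one hy.ne', Real.log_mul hy.ne' (Real.Gamma_pos_of_pos hy).ne']
    simp
  have hy1 : 0 < y + 1 := by linarith
  constructor
  · rw [← hs]
    exact Real.convexOn_log_Gamma.le_slope_of_hasDerivAt (Set.mem_Ioi.2 hy) (Set.mem_Ioi.2 hy1)
      (by linarith) (digamma_hasDeriv hy)
  · rw [← hs, ← digamma_add_one hy]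
    exact Real.convexOn_log_Gamma.slope_le_of_hasDerivAt (Set.mem_Ioi.2 hy) (Set.mem_Ioi.2 hy1)
      (by linarith) (digamma_hasDeriv hy1)

def gdig (y : ℝ) : ℝ := digamma y - Real.log y + 1 / (2 * y)

lemma gdig_abs {y : ℝ} (hy : 0 < y) : |gdig y| ≤ 1 / y := by
  obtain ⟨h1, h2⟩ := digamma_bounds hy
  have h3 : 1 / (2 * y) = (1 / y) / 2 := by field_simp
  have h4 : 0 < 1 / y := by positivity
  unfold gdig
  rw [abs_le, h3]
  constructor <;> linarith

lemma gdig_step {y : ℝ} (hy : 0 < y) :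
    0 ≤ gdig (y + 1) - gdig y ∧
    gdig (y + 1) - gdig y ≤ 1 / (2 * y ^ 2) - 1 / (2 * (y + 1) ^ 2) := by
  have e : Real.log (y + 1) = Real.log y + Real.log (1 + 1 / y) := by
    rw [← Real.log_mul hy.ne' (by positivity)]
    congr 1
    field_simp
  have e2 : gdig (y + 1) - gdig y
      = 1 / y + 1 / (2 * (y + 1)) - 1 / (2 * y) - Real.log (1 + 1 / y) := by
    unfold gdig
    rw [digamma_add_one hy, e]; ring
  rw [e2]
  constructor
  · have h := Real.self_le_sinh_iff.2 (Real.log_nonneg (by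
      have : 0 < 1 / y := by positivity
      linarith : (1:ℝ) ≤ 1 + 1 / y))
    rw [Real.sinh_log (by positivity)] at h
    have : (1 + 1 / y - (1 + 1 / y)⁻¹) / 2 = 1 / y + 1 / (2 * (y + 1)) - 1 / (2 * y) := by
      field_simp
      ring
    linarith
  · have h := Real.le_log_one_add_of_nonneg (by positivity : 0 ≤ 1 / y)
    have h2 : 1 / y + 1 / (2 * (y + 1)) - 1 / (2 * y) - 2 * (1 / y) / (1 / y + 2) 
       ≤ 1 / (2 * y ^ 2) - 1 / (2 * (y + 1) ^ 2) := by
      rw [← sub_nonneg]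
      have : 1 / (2 * y ^ 2) - 1 / (2 * (y + 1) ^ 2) - (1 / y + 1 / (2 * (y + 1)) - 1 / (2 * y) - 2 * (1 / y) / (1 / y + 2)) = ((2 * y + 1)^2 - y * (y + 1)) / (2 * y ^ 2 * (y + 1)^2 * (2 * y + 1)) := by
        have : 1 + 2 * y ≠ 0 := by positivity
        have : 1 + y * 2 ≠ 0 := by positivity
        field_simp
        ring
      rw [this]
      apply div_nonneg
      · nlinarith
      · positivity
    linarith

lemma gdig_bound {y : ℝ} (hy : 0 < y) : |gdig y| ≤ 1 / (2 * y ^ 2) := by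
  have key : ∀ n : ℕ, 0 ≤ gdig (y + n) - gdig y ∧
      gdig (y + n) - gdig y ≤ 1 / (2 * y ^ 2) - 1 / (2 * (y + n) ^ 2) := by
    intro n
    induction n with
    | zero => simp
    | succ k ih =>
      have := gdig_step (y := y + k) (by positivity)
      push_cast
      rw [← add_assoc]
      constructor <;> linarith [ih.1, ih.2, this.1, this.2]
  have lim : Filter.Tendsto (fun n : ℕ => gdig (y + n)) Filter.atTop (nhds 0) := by
    have ht : Filter.Tendsto (fun n : ℕ => 1 / (y + (n:ℝ))) Filter.atTop (nhds 0) := by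
      simp only [one_div]
      exact tendsto_inv_atTop_zero.comp
        (Filter.tendsto_atTop_add_const_left _ _ tendsto_natCast_atTop_atTop)
    exact squeeze_zero_norm (fun n => gdig_abs (by positivity)) ht
  have l2 := lim.sub_const (gdig y)
  have a := ge_of_tendsto' l2 (fun n => (key n).1)
  have b := le_of_tendsto' l2 (fun n => (key n).2.trans
    (sub_le_self _ (by positivity) : _ ≤ 1 / (2 * y ^ 2)))
  rw [abs_le]
  constructor
  · linarith
  · have : 0 ≤ 1 / (2 * y ^ 2) := by positivity
    linarith

lemma sum_digamma {a : ℝ} (ha : 0 < a) (m : ℕ) :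
    ∑ j ∈ range m, 1 / ((j:ℝ) + a) = digamma (m + a) - digamma a := by
  induction m with
  | zero => simp
  | succ k ih =>
    rw [sum_range_succ, ih]
    have := digamma_add_one (y := k + a) (by positivity)
    push_cast
    rw [show (k:ℝ) + 1 + a = k + a + 1 by ring, this]; ring

lemma harm_asymp {a T f : ℝ} (ha : 0 < a) (hT : 0 < T) (m : ℕ) (hf0 : 0 ≤ f) (hf1 : f ≤ 1)
    (hm : (m:ℝ) + a = T + 1 - f) :
    |∑ j ∈ range m, 1 / ((j:ℝ) + a) - (Real.log T - digamma a - (f - 1/2) / T)| ≤ 2 / T ^ 2 := by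
  rw [sum_digamma ha, hm]
  obtain ⟨h, hh⟩ : ∃ h, h = 1 - f := ⟨_, rfl⟩
  have h0 : 0 ≤ h := by linarith
  have h1 : h ≤ 1 := by linarith
  have hy : T + 1 - f = T + h := by linarith
  rw [hy]
  have hp : 0 < T + h := by linarith
  have g := abs_le.1 (gdig_bound hp)
  have g' : 1 / (2 * (T + h) ^ 2) ≤ 1 / (2 * T ^ 2) := by
    gcongr; linarith
  unfold gdig at g
  have e : Real.log (T + h) = Real.log T + Real.log (1 + h / T) := by
    rw [← Real.log_mul hT.ne' (by positivity)]
    congr 1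
    field_simp
  have u1 : Real.log (1 + h / T) ≤ h / T := by
    have := Real.log_le_sub_one_of_pos (by positivity : 0 < 1 + h / T)
    linarith
  have u2 : h / T - 1 / (2 * T ^ 2) ≤ Real.log (1 + h / T) := by
    refine le_trans ?_ (Real.le_log_one_add_of_nonneg (by positivity))
    have : 2 * (h / T) / (h / T + 2) = h / T - h ^ 2 / (T * (h + 2 * T)) := by
      field_simp
      ring
    rw [this]
    have : h ^ 2 / (T * (h + 2 * T)) ≤ 1 / (2 * T ^ 2) := by
      apply div_le_div₀ <;> nlinarith
    linarith
  have v : 1 / (2 * T) - 1 / (2 * (T + h)) = h / (2 * T * (T + h)) := by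
    field_simp; ring
  have v0 : 0 ≤ h / (2 * T * (T + h)) := by positivity
  have v1 : h / (2 * T * (T + h)) ≤ 1 / (2 * T ^ 2) := by
    apply div_le_div₀ <;> nlinarith
  have w : (f - 1/2) / T = 1 / (2 * T) - h / T := by
    rw [hh]; field_simp; ring
  have z : 2 / T ^ 2 = 4 * (1 / (2 * T ^ 2)) := by field_simp; norm_num
  have z0 : 0 ≤ 1 / (2 * T ^ 2) := by positivity
  rw [w, z, abs_le]
  constructor <;> linarith [g.1, g.2]

/-- residue class as an arithmetic progression -/
lemma filter_eq_image (M l : ℕ) (hM : 0 < M) (hl : 1 ≤ l) (hl' : l ≤ M) (y : ℝ) (hy : 0 ≤ y) :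
    (Icc 1 ⌊y⌋₊).filter (fun n => n % M = l % M)
      = (range (⌊y / M - (l:ℝ) / M⌋ + 1).toNat).image (fun j => l + M * j) := by
  have hMr : (0:ℝ) < M := by exact_mod_cast hM
  have key : ∀ j : ℕ, j < (⌊y / M - (l:ℝ) / M⌋ + 1).toNat ↔ l + M * j ≤ ⌊y⌋₊ := by
    intro j
    rw [Nat.le_floor_iff hy, Int.lt_toNat, Int.lt_add_one_iff, Int.le_floor, ← sub_div,
      le_div_iff₀ hMr]
    push_cast
    constructor <;> intro h <;> linarith
  ext n
  simp only [mem_filter, mem_Icc, mem_image, mem_range, key]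
  constructor
  · rintro ⟨⟨h1, h2⟩, h3⟩
    have hln : l ≤ n := by
      by_contra hlt
      push Not at hlt
      rcases Nat.lt_or_ge l M with h | h
      · rw [Nat.mod_eq_of_lt h, Nat.mod_eq_of_lt (hlt.trans h)] at h3; omega
      · have : l = M := by omega
        subst this
        rw [Nat.mod_self, Nat.mod_eq_of_lt hlt] at h3; omega
    obtain ⟨j, hj⟩ := (Nat.modEq_iff_dvd' hln).1 (show l ≡ n [MOD M] from h3.symm)
    refine ⟨j, ?_, ?_⟩ <;> omega
  · rintro ⟨j, h1, rfl⟩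
    exact ⟨⟨by omega, h1⟩, by simp⟩

lemma m_cast (M l : ℕ) (hM : 0 < M) (hl' : l ≤ M) (y : ℝ) (hy : 0 ≤ y) :
    (((⌊y / M - (l:ℝ) / M⌋ + 1).toNat : ℕ) : ℝ)
      = y / M - (l:ℝ) / M + 1 - Int.fract (y / M - (l:ℝ) / M) := by
  have hMr : (0:ℝ) < M := by exact_mod_cast hM
  have h0 : (-1 : ℤ) ≤ ⌊y / M - (l:ℝ) / M⌋ := by
    rw [Int.le_floor]
    have : (l:ℝ) / M ≤ 1 := by
      rw [div_le_one hMr]; exact_mod_cast hl'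
    have : 0 ≤ y / M := by positivity
    push_cast
    linarith
  have : (((⌊y / M - (l:ℝ) / M⌋ + 1).toNat : ℤ) : ℝ) = ((⌊y / M - (l:ℝ) / M⌋ + 1 : ℤ) : ℝ) := by
    rw [Int.toNat_of_nonneg (by omega)]
  rw [Int.cast_natCast] at this
  rw [this]
  push_cast
  unfold Int.fract
  ring

lemma inj_ap (M l : ℕ) (hM : 0 < M) : Function.Injective (fun j => l + M * j) := by
  intro a b h
  simpa [hM.ne'] using h

lemma count_ap (M l : ℕ) (hM : 0 < M) (hl : 1 ≤ l) (hl' : l ≤ M) (y : ℝ) (hy : 0 ≤ y) :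
    ((((Icc 1 ⌊y⌋₊).filter (fun n => n % M = l % M)).card : ℕ) : ℝ)
      = y / M + (1/2 - (l:ℝ) / M) - (Int.fract (y / M - (l:ℝ) / M) - 1/2) := by
  rw [filter_eq_image M l hM hl hl' y hy, card_image_of_injective _ (inj_ap M l hM), card_range,
    m_cast M l hM hl' y hy]
  ring

lemma sum_ap (M l : ℕ) (hM : 0 < M) (hl : 1 ≤ l) (hl' : l ≤ M) (y : ℝ) (hy : 0 < y) :
    |∑ n ∈ (Icc 1 ⌊y⌋₊).filter (fun n => n % M = l % M), (M:ℝ) / n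
      - (Real.log (y / M) - digamma ((l:ℝ) / M)
        - (Int.fract (y / M - (l:ℝ) / M) - 1/2) / (y / M))| ≤ 2 / (y / M) ^ 2 := by
  have hMr : (0:ℝ) < M := by exact_mod_cast hM
  have hlr : (0:ℝ) < l := by exact_mod_cast hl
  rw [filter_eq_image M l hM hl hl' y hy.le, sum_image ((inj_ap M l hM).injOn)]
  have := harm_asymp (a := (l:ℝ) / M) (T := y / M) (f := Int.fract (y / M - (l:ℝ) / M))
    (by positivity) (by positivity) (⌊y / M - (l:ℝ) / M⌋ + 1).toNat
    (Int.fract_nonneg _) (Int.fract_lt_one _).le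
    (by rw [m_cast M l hM hl' y hy.le]; ring)
  convert this using 4 with j hj
  push_cast
  field_simp
  ring

/-- hyperbola method -/
lemma hyperbola (M₁ M₂ l₁ l₂ : ℕ) (X : ℝ) (hX : 0 ≤ X) :
    (∑ n ∈ Icc 1 ⌊X⌋₊, (dCong M₁ M₂ l₁ l₂ n))
      + ((Icc 1 ⌊√X⌋₊).filter (fun n => n % M₁ = l₁ % M₁)).card
        * ((Icc 1 ⌊√X⌋₊).filter (fun n => n % M₂ = l₂ % M₂)).card
    = ∑ n ∈ (Icc 1 ⌊√X⌋₊).filter (fun n => n % M₁ = l₁ % M₁),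
        ((Icc 1 ⌊X / n⌋₊).filter (fun n => n % M₂ = l₂ % M₂)).card
      + ∑ n ∈ (Icc 1 ⌊√X⌋₊).filter (fun n => n % M₂ = l₂ % M₂),
        ((Icc 1 ⌊X / n⌋₊).filter (fun n => n % M₁ = l₁ % M₁)).card := by
  set N := ⌊X⌋₊ with hN
  set K := ⌊√X⌋₊ with hK
  have hKK : K * K ≤ N := by
    rw [hN, Nat.le_floor_iff hX]
    push_cast
    have : (K:ℝ) ≤ √X := Nat.floor_le (Real.sqrt_nonneg _)
    nlinarith [Real.mul_self_sqrt hX, Real.sqrt_nonneg X]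
  have hNK : N < (K + 1) * (K + 1) := by
    rw [hN, Nat.floor_lt hX]
    push_cast
    have : √X < K + 1 := Nat.lt_floor_add_one _
    nlinarith [Real.mul_self_sqrt hX, Real.sqrt_nonneg X]
  have hdiv : ∀ n : ℕ, ⌊X / n⌋₊ = N / n := fun n => Nat.floor_div_natCast X n
  simp only [hdiv]
  set P := ((Icc 1 N) ×ˢ (Icc 1 N)).filter
    (fun p => p.1 * p.2 ≤ N ∧ p.1 % M₁ = l₁ % M₁ ∧ p.2 % M₂ = l₂ % M₂) with hP
  have hS : ∑ n ∈ Icc 1 N, dCong M₁ M₂ l₁ l₂ n = P.card := by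
    rw [card_eq_sum_card_fiberwise (f := fun p => p.1 * p.2) (t := Icc 1 N)]
    · apply sum_congr rfl
      intro n hn
      rw [mem_Icc] at hn
      unfold dCong
      congr 1
      ext ⟨a, b⟩
      simp only [hP, mem_filter, Nat.mem_divisorsAntidiagonal, mem_product, mem_Icc]
      constructor
      · rintro ⟨⟨h, h0⟩, h1, h2⟩
        have ha : 0 < a := Nat.pos_of_ne_zero (by rintro rfl; simp at h; omega)
        have hb : 0 < b := Nat.pos_of_ne_zero (by rintro rfl; simp at h; omega)
        have : a ≤ n := by nlinarith
        have : b ≤ n := by nlinarith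
        exact ⟨⟨⟨⟨by omega, by omega⟩, by omega, by omega⟩, by omega, h1, h2⟩, h⟩
      · rintro ⟨⟨_, _, h1, h2⟩, h⟩
        exact ⟨⟨h, by omega⟩, h1, h2⟩
    · intro p hp
      simp only [hP, coe_filter, mem_product, mem_Icc, Set.mem_ofPred_eq] at hp
      simp only [coe_Icc, Set.mem_Icc]
      exact ⟨Nat.mul_pos (by omega) (by omega), hp.2.1⟩
  have hA : (P.filter (fun p => p.1 ≤ K)).card
      = ∑ n ∈ (Icc 1 K).filter (fun n => n % M₁ = l₁ % M₁),
        ((Icc 1 (N / n)).filter (fun n => n % M₂ = l₂ % M₂)).card := by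
    rw [← card_sigma]
    refine card_bij' (fun p _ => (⟨p.1, p.2⟩ : (_ : ℕ) × ℕ)) (fun s _ => (s.1, s.2)) ?_ ?_
      (fun _ _ => rfl) (fun _ _ => rfl)
    · rintro ⟨a, b⟩ h
      simp only [hP, mem_filter, mem_product, mem_Icc, mem_sigma] at h ⊢
      obtain ⟨⟨⟨⟨h1, h2⟩, h3, h4⟩, h5, h6, h7⟩, h8⟩ := h
      exact ⟨⟨⟨h1, h8⟩, h6⟩, ⟨h3, (Nat.le_div_iff_mul_le h1).2 (by linarith)⟩, h7⟩
    · rintro ⟨a, b⟩ h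
      simp only [hP, mem_filter, mem_product, mem_Icc, mem_sigma] at h ⊢
      obtain ⟨⟨⟨h1, h2⟩, h3⟩, ⟨h4, h5⟩, h6⟩ := h
      have h7 := (Nat.le_div_iff_mul_le h1).1 h5
      exact ⟨⟨⟨⟨h1, by nlinarith⟩, h4, by nlinarith⟩, by linarith, h3, h6⟩, h2⟩
  have hB : (P.filter (fun p => p.2 ≤ K)).card
      = ∑ n ∈ (Icc 1 K).filter (fun n => n % M₂ = l₂ % M₂),
        ((Icc 1 (N / n)).filter (fun n => n % M₁ = l₁ % M₁)).card := by
    rw [← card_sigma]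
    refine card_bij' (fun p _ => (⟨p.2, p.1⟩ : (_ : ℕ) × ℕ)) (fun s _ => (s.2, s.1)) ?_ ?_
      (fun _ _ => rfl) (fun _ _ => rfl)
    · rintro ⟨a, b⟩ h
      simp only [hP, mem_filter, mem_product, mem_Icc, mem_sigma] at h ⊢
      obtain ⟨⟨⟨⟨h1, h2⟩, h3, h4⟩, h5, h6, h7⟩, h8⟩ := h
      exact ⟨⟨⟨h3, h8⟩, h7⟩, ⟨h1, (Nat.le_div_iff_mul_le h3).2 (by linarith)⟩, h6⟩
    · rintro ⟨a, b⟩ h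
      simp only [hP, mem_filter, mem_product, mem_Icc, mem_sigma] at h ⊢
      obtain ⟨⟨⟨h1, h2⟩, h3⟩, ⟨h4, h5⟩, h6⟩ := h
      have h7 := (Nat.le_div_iff_mul_le h1).1 h5
      exact ⟨⟨⟨⟨h4, by nlinarith⟩, h1, by nlinarith⟩, by linarith, h6, h3⟩, h2⟩
  have hU : P.filter (fun p => p.1 ≤ K) ∪ P.filter (fun p => p.2 ≤ K) = P := by
    rw [← filter_or]
    apply filter_true_of_mem
    rintro ⟨a, b⟩ h
    simp only [hP, mem_filter] at h
    by_contra hc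
    push Not at hc
    have := Nat.mul_le_mul (Nat.succ_le_of_lt hc.1) (Nat.succ_le_of_lt hc.2)
    simp only [Nat.succ_eq_add_one] at this
    omega
  have hI : P.filter (fun p => p.1 ≤ K) ∩ P.filter (fun p => p.2 ≤ K)
      = ((Icc 1 K).filter (fun n => n % M₁ = l₁ % M₁))
        ×ˢ ((Icc 1 K).filter (fun n => n % M₂ = l₂ % M₂)) := by
    ext ⟨a, b⟩
    simp only [hP, mem_inter, mem_filter, mem_product, mem_Icc]
    constructor
    · rintro ⟨⟨⟨⟨⟨h1, h2⟩, h3, h4⟩, h5, h6, h7⟩, h8⟩, _, h9⟩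
      exact ⟨⟨⟨h1, h8⟩, h6⟩, ⟨h3, h9⟩, h7⟩
    · rintro ⟨⟨⟨h1, h8⟩, h6⟩, ⟨h3, h9⟩, h7⟩
      have hab : a * b ≤ N := (Nat.mul_le_mul h8 h9).trans hKK
      have : (((1 ≤ a ∧ a ≤ N) ∧ 1 ≤ b ∧ b ≤ N) ∧ a * b ≤ N ∧ a % M₁ = l₁ % M₁ ∧ b % M₂ = l₂ % M₂) :=
        ⟨⟨⟨h1, by nlinarith⟩, h3, by nlinarith⟩, hab, h6, h7⟩
      exact ⟨⟨this, h8⟩, this, h9⟩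
  rw [hS, ← hA, ← hB, ← card_product, ← hI]
  have := Finset.card_union_add_card_inter (P.filter (fun p => p.1 ≤ K)) (P.filter (fun p => p.2 ≤ K))
  rw [hU] at this
  exact this

theorem Delta_eq_psi_sums_up_to_bounded
    (M₁ M₂ ℓ₁ ℓ₂ : ℕ) (hM₁ : 0 < M₁) (hM₂ : 0 < M₂)
    (hℓ₁ : 1 ≤ ℓ₁) (hℓ₁' : ℓ₁ ≤ M₁) (hℓ₂ : 1 ≤ ℓ₂) (hℓ₂' : ℓ₂ ≤ M₂) :
    ∃ C : ℝ, ∀ x : ℝ, 1 ≤ x →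
      |Δerr M₁ M₂ ℓ₁ ℓ₂ x
          + (∑ n ∈ (Finset.Icc 1 ⌊Real.sqrt ((M₁ * M₂ : ℕ) * x)⌋₊).filter
                (fun n => n % M₁ = ℓ₁ % M₁),
              (Int.fract ((M₁ : ℝ) * x / n - (ℓ₂ : ℝ) / M₂) - 1/2))
          + (∑ n ∈ (Finset.Icc 1 ⌊Real.sqrt ((M₁ * M₂ : ℕ) * x)⌋₊).filter
                (fun n => n % M₂ = ℓ₂ % M₂),
              (Int.fract ((M₂ : ℝ) * x / n - (ℓ₁ : ℝ) / M₁) - 1/2))|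
        ≤ C := by
  have h1 : (0:ℝ) < M₁ := by exact_mod_cast hM₁
  have h2 : (0:ℝ) < M₂ := by exact_mod_cast hM₂
  refine ⟨2 * (M₁ / M₂) + 2 * (M₂ / M₁) + 1, fun x hx => ?_⟩
  have hx0 : 0 < x := by linarith
  obtain ⟨X, hXd⟩ : ∃ X : ℝ, X = ((M₁ * M₂ : ℕ) : ℝ) * x := ⟨_, rfl⟩
  have hXe : X = M₁ * M₂ * x := by rw [hXd]; push_cast; ring
  have hX : 0 < X := by rw [hXe]; positivity
  unfold Δerr
  rw [← hXd]
  have hsq : 0 < √X := Real.sqrt_pos.2 hX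
  have hyp := hyperbola M₁ M₂ ℓ₁ ℓ₂ X hX.le
  have hypR := congrArg (Nat.cast : ℕ → ℝ) hyp
  push_cast at hypR
  rw [count_ap M₁ ℓ₁ hM₁ hℓ₁ hℓ₁' _ hsq.le, count_ap M₂ ℓ₂ hM₂ hℓ₂ hℓ₂' _ hsq.le] at hypR
  have c1 := count_ap M₁ ℓ₁ hM₁ hℓ₁ hℓ₁' _ hsq.le
  have c2 := count_ap M₂ ℓ₂ hM₂ hℓ₂ hℓ₂' _ hsq.le
  have s1 := sum_ap M₁ ℓ₁ hM₁ hℓ₁ hℓ₁' _ hsq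
  have s2 := sum_ap M₂ ℓ₂ hM₂ hℓ₂ hℓ₂' _ hsq
  have e1 : ∑ n ∈ (Icc 1 ⌊√X⌋₊).filter (fun n => n % M₁ = ℓ₁ % M₁),
        ((((Icc 1 ⌊X / n⌋₊).filter (fun n => n % M₂ = ℓ₂ % M₂)).card : ℕ) : ℝ)
      = x * ∑ n ∈ (Icc 1 ⌊√X⌋₊).filter (fun n => n % M₁ = ℓ₁ % M₁), (M₁ : ℝ) / n
        + (((Icc 1 ⌊√X⌋₊).filter (fun n => n % M₁ = ℓ₁ % M₁)).card : ℝ) * (1/2 - (ℓ₂ : ℝ) / M₂)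
        - ∑ n ∈ (Icc 1 ⌊√X⌋₊).filter (fun n => n % M₁ = ℓ₁ % M₁),
              (Int.fract ((M₁ : ℝ) * x / n - (ℓ₂ : ℝ) / M₂) - 1/2) := by
    rw [← nsmul_eq_mul, ← sum_const, mul_sum, ← sum_add_distrib, ← sum_sub_distrib]
    apply sum_congr rfl
    intro n _
    rw [count_ap M₂ ℓ₂ hM₂ hℓ₂ hℓ₂' _ (by positivity)]
    have : X / n / M₂ = M₁ * x / n := by rw [hXe]; field_simp
    rw [this]; ring
  have e2 : ∑ n ∈ (Icc 1 ⌊√X⌋₊).filter (fun n => n % M₂ = ℓ₂ % M₂),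
        ((((Icc 1 ⌊X / n⌋₊).filter (fun n => n % M₁ = ℓ₁ % M₁)).card : ℕ) : ℝ)
      = x * ∑ n ∈ (Icc 1 ⌊√X⌋₊).filter (fun n => n % M₂ = ℓ₂ % M₂), (M₂ : ℝ) / n
        + (((Icc 1 ⌊√X⌋₊).filter (fun n => n % M₂ = ℓ₂ % M₂)).card : ℝ) * (1/2 - (ℓ₁ : ℝ) / M₁)
        - ∑ n ∈ (Icc 1 ⌊√X⌋₊).filter (fun n => n % M₂ = ℓ₂ % M₂),
              (Int.fract ((M₂ : ℝ) * x / n - (ℓ₁ : ℝ) / M₁) - 1/2) := by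
    rw [← nsmul_eq_mul, ← sum_const, mul_sum, ← sum_add_distrib, ← sum_sub_distrib]
    apply sum_congr rfl
    intro n _
    rw [count_ap M₁ ℓ₁ hM₁ hℓ₁ hℓ₁' _ (by positivity)]
    have : X / n / M₁ = M₂ * x / n := by rw [hXe]; field_simp
    rw [this]; ring
  rw [e1, e2, c1, c2] at hypR
  have t1 : |Int.fract (√X / M₁ - (ℓ₁ : ℝ) / M₁) - 1/2| ≤ 1 := by
    rw [abs_le]
    constructor <;> linarith [Int.fract_nonneg (√X / M₁ - (ℓ₁ : ℝ) / M₁),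
      Int.fract_lt_one (√X / M₁ - (ℓ₁ : ℝ) / M₁)]
  have t2 : |Int.fract (√X / M₂ - (ℓ₂ : ℝ) / M₂) - 1/2| ≤ 1 := by
    rw [abs_le]
    constructor <;> linarith [Int.fract_nonneg (√X / M₂ - (ℓ₂ : ℝ) / M₂),
      Int.fract_lt_one (√X / M₂ - (ℓ₂ : ℝ) / M₂)]
  have hT1 : 0 < √X / M₁ := by positivity
  have hT2 : 0 < √X / M₂ := by positivity
  have hTT : x = √X / M₁ * (√X / M₂) := by
    have : √X * √X = M₁ * M₂ * x := by rw [Real.mul_self_sqrt hX.le, hXe]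
    field_simp
    nlinarith
  have hr1 : (M₁ / M₂ : ℝ) = √X / M₂ / (√X / M₁) := by field_simp
  have hr2 : (M₂ / M₁ : ℝ) = √X / M₁ / (√X / M₂) := by field_simp
  have hlog : Real.log x = Real.log (√X / M₁) + Real.log (√X / M₂) := by
    rw [← Real.log_mul hT1.ne' hT2.ne', ← hTT]
  rw [hr1, hr2]
  generalize Int.fract (√X / M₁ - (ℓ₁ : ℝ) / M₁) - 1/2 = θ₁ at *
  generalize Int.fract (√X / M₂ - (ℓ₂ : ℝ) / M₂) - 1/2 = θ₂ at *
  generalize ∑ n ∈ (Icc 1 ⌊√X⌋₊).filter (fun n => n % M₁ = ℓ₁ % M₁), (M₁ : ℝ) / n = H₁ at *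
  generalize ∑ n ∈ (Icc 1 ⌊√X⌋₊).filter (fun n => n % M₂ = ℓ₂ % M₂), (M₂ : ℝ) / n = H₂ at *
  generalize ∑ n ∈ (Icc 1 ⌊√X⌋₊).filter (fun n => n % M₁ = ℓ₁ % M₁),
              (Int.fract ((M₁ : ℝ) * x / n - (ℓ₂ : ℝ) / M₂) - 1/2) = F₁ at *
  generalize ∑ n ∈ (Icc 1 ⌊√X⌋₊).filter (fun n => n % M₂ = ℓ₂ % M₂),
              (Int.fract ((M₂ : ℝ) * x / n - (ℓ₁ : ℝ) / M₁) - 1/2) = F₂ at *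
  generalize ∑ n ∈ Icc 1 ⌊X⌋₊, (dCong M₁ M₂ ℓ₁ ℓ₂ n : ℝ) = S at *
  generalize digamma ((ℓ₁ : ℝ) / M₁) = D₁ at *
  generalize digamma ((ℓ₂ : ℝ) / M₂) = D₂ at *
  generalize (ℓ₁ : ℝ) / M₁ = a₁ at *
  generalize (ℓ₂ : ℝ) / M₂ = a₂ at *
  clear hr1 hr2 hyp e1 e2 c1 c2
  generalize √X / M₁ = T₁ at *
  generalize √X / M₂ = T₂ at *
  obtain ⟨E₁, hE₁⟩ : ∃ E, E = H₁ - (Real.log T₁ - D₁ - θ₁ / T₁) := ⟨_, rfl⟩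
  obtain ⟨E₂, hE₂⟩ : ∃ E, E = H₂ - (Real.log T₂ - D₂ - θ₂ / T₂) := ⟨_, rfl⟩
  rw [← hE₁] at s1
  rw [← hE₂] at s2
  have x1 : x * (θ₁ / T₁) = T₂ * θ₁ := by rw [hTT]; field_simp
  have x2 : x * (θ₂ / T₂) = T₁ * θ₂ := by rw [hTT]; field_simp
  have b1 : |x * E₁| ≤ 2 * (T₂ / T₁) := by
    rw [abs_mul, abs_of_pos hx0]
    calc x * |E₁| ≤ x * (2 / T₁ ^ 2) := by gcongr
      _ = 2 * (T₂ / T₁) := by rw [hTT]; field_simp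
  have b2 : |x * E₂| ≤ 2 * (T₁ / T₂) := by
    rw [abs_mul, abs_of_pos hx0]
    calc x * |E₂| ≤ x * (2 / T₂ ^ 2) := by gcongr
      _ = 2 * (T₁ / T₂) := by rw [hTT]; field_simp
  have b3 : |θ₁ * θ₂| ≤ 1 := by
    rw [abs_mul]; exact mul_le_one₀ t1 (abs_nonneg _) t2
  have fin : S - x * (Real.log x - 1 - D₁ - D₂) - (1/2 - a₁) * (1/2 - a₂) + F₁ + F₂
      = x * E₁ + x * E₂ - θ₁ * θ₂ := by
    rw [hlog, hE₁, hE₂]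
    linear_combination hypR - x1 - x2 + hTT
  rw [fin]
  calc |x * E₁ + x * E₂ - θ₁ * θ₂| ≤ |x * E₁ + x * E₂| + |θ₁ * θ₂| := abs_sub _ _
    _ ≤ |x * E₁| + |x * E₂| + |θ₁ * θ₂| := by gcongr; exact abs_add_le _ _
    _ ≤ _ := by linarith
end
end

section
/- Let M₁, M₂ be positive integers and ℓ₁, ℓ₂ integers with 1 ≤ ℓ₁ ≤ M₁, 1 ≤ ℓ₂ ≤ M₂. For T ≥ 10 set y = T^{3/4}. Then for every ε > 0, ∫_{T/2}^T S₁(x) dx = (1/(32π⁴)) · C₄(ℓ₁/M₁, ℓ₂/M₂) · ∫_{T/2}^T x dx + O(T^{2−1/8+ε}), where the implied constant depends at most on M₁, M₂ and ε. -/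
open Real MeasureTheory Finset
open scoped Classical

noncomputable section

/-- The phase `h ℓ₂/M₂ + r ℓ₁/M₁ + 1/8` attached to a factorization pair `p = (h, r)`. -/
def phase (M₁ M₂ ℓ₁ ℓ₂ : ℕ) (p : ℕ × ℕ) : ℝ :=
  ((p.1 : ℝ) * ℓ₂) / M₂ + ((p.2 : ℝ) * ℓ₁) / M₁ + 1/8

/-- The series `s_{4;v}` with sign pattern `(1, e₂, e₃, e₄)`. -/
def s4 (M₁ M₂ ℓ₁ ℓ₂ : ℕ) (e₂ e₃ e₄ : ℝ) : ℝ :=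
  ∑' q : ℕ × ℕ × ℕ × ℕ,
    if 0 < q.1 ∧ 0 < q.2.1 ∧ 0 < q.2.2.1 ∧ 0 < q.2.2.2 ∧
        Real.sqrt q.1 + e₂ * Real.sqrt q.2.1 + e₃ * Real.sqrt q.2.2.1
          + e₄ * Real.sqrt q.2.2.2 = 0 then
      ((q.1 : ℝ) * q.2.1 * q.2.2.1 * q.2.2.2) ^ (-(3:ℝ)/4) *
        ∑ p₁ ∈ Nat.divisorsAntidiagonal q.1, ∑ p₂ ∈ Nat.divisorsAntidiagonal q.2.1,
        ∑ p₃ ∈ Nat.divisorsAntidiagonal q.2.2.1, ∑ p₄ ∈ Nat.divisorsAntidiagonal q.2.2.2,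
          Real.cos (2 * π * (phase M₁ M₂ ℓ₁ ℓ₂ p₁ + e₂ * phase M₁ M₂ ℓ₁ ℓ₂ p₂
            + e₃ * phase M₁ M₂ ℓ₁ ℓ₂ p₃ + e₄ * phase M₁ M₂ ℓ₁ ℓ₂ p₄))
    else 0

/-- `C₄(ℓ₁/M₁, ℓ₂/M₂) = Σ_{v=1}^3 binom(3,v) s_{4;v}`. -/
def C4 (M₁ M₂ ℓ₁ ℓ₂ : ℕ) : ℝ :=
  3 * s4 M₁ M₂ ℓ₁ ℓ₂ 1 1 (-1) + 3 * s4 M₁ M₂ ℓ₁ ℓ₂ 1 (-1) (-1)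
    + s4 M₁ M₂ ℓ₁ ℓ₂ (-1) (-1) (-1)

/-- `α(n, i) = √n₁ + (−1)^{i₁}√n₂ + (−1)^{i₂}√n₃ + (−1)^{i₃}√n₄`. -/
def alphaNI (n : ℕ × ℕ × ℕ × ℕ) (i : Fin 2 × Fin 2 × Fin 2) : ℝ :=
  Real.sqrt n.1 + (-1 : ℝ) ^ (i.1 : ℕ) * Real.sqrt n.2.1
    + (-1 : ℝ) ^ (i.2.1 : ℕ) * Real.sqrt n.2.2.1
    + (-1 : ℝ) ^ (i.2.2 : ℕ) * Real.sqrt n.2.2.2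

/-- `β(h, r, i)`, for the factorizations `n_j = h_j r_j` encoded as pairs `p_j`. -/
def betaSum (M₁ M₂ ℓ₁ ℓ₂ : ℕ) (i : Fin 2 × Fin 2 × Fin 2) (p₁ p₂ p₃ p₄ : ℕ × ℕ) : ℝ :=
  phase M₁ M₂ ℓ₁ ℓ₂ p₁ + (-1 : ℝ) ^ (i.1 : ℕ) * phase M₁ M₂ ℓ₁ ℓ₂ p₂
    + (-1 : ℝ) ^ (i.2.1 : ℕ) * phase M₁ M₂ ℓ₁ ℓ₂ p₃
    + (-1 : ℝ) ^ (i.2.2 : ℕ) * phase M₁ M₂ ℓ₁ ℓ₂ p₄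

/-- The "diagonal" part `S₁(x)` of `R₀(x;y)⁴`. -/
def S1 (M₁ M₂ ℓ₁ ℓ₂ : ℕ) (y x : ℝ) : ℝ :=
  x / (32 * π ^ 4) * ∑ i : Fin 2 × Fin 2 × Fin 2,
    ∑ n₁ ∈ Finset.Icc 1 ⌊y⌋₊, ∑ n₂ ∈ Finset.Icc 1 ⌊y⌋₊,
    ∑ n₃ ∈ Finset.Icc 1 ⌊y⌋₊, ∑ n₄ ∈ Finset.Icc 1 ⌊y⌋₊,
      if alphaNI (n₁, n₂, n₃, n₄) i = 0 then
        ((n₁ : ℝ) * n₂ * n₃ * n₄) ^ (-(3:ℝ)/4) *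
          ∑ p₁ ∈ Nat.divisorsAntidiagonal n₁, ∑ p₂ ∈ Nat.divisorsAntidiagonal n₂,
          ∑ p₃ ∈ Nat.divisorsAntidiagonal n₃, ∑ p₄ ∈ Nat.divisorsAntidiagonal n₄,
            Real.cos (2 * π * betaSum M₁ M₂ ℓ₁ ℓ₂ i p₁ p₂ p₃ p₄)
      else 0

/-- The "off-diagonal" part `S₂(x)` of `R₀(x;y)⁴`. -/
def S2 (M₁ M₂ ℓ₁ ℓ₂ : ℕ) (y x : ℝ) : ℝ :=
  x / (32 * π ^ 4) * ∑ i : Fin 2 × Fin 2 × Fin 2,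
    ∑ n₁ ∈ Finset.Icc 1 ⌊y⌋₊, ∑ n₂ ∈ Finset.Icc 1 ⌊y⌋₊,
    ∑ n₃ ∈ Finset.Icc 1 ⌊y⌋₊, ∑ n₄ ∈ Finset.Icc 1 ⌊y⌋₊,
      if alphaNI (n₁, n₂, n₃, n₄) i ≠ 0 then
        ((n₁ : ℝ) * n₂ * n₃ * n₄) ^ (-(3:ℝ)/4) *
          ∑ p₁ ∈ Nat.divisorsAntidiagonal n₁, ∑ p₂ ∈ Nat.divisorsAntidiagonal n₂,
          ∑ p₃ ∈ Nat.divisorsAntidiagonal n₃, ∑ p₄ ∈ Nat.divisorsAntidiagonal n₄,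
            Real.cos (4 * π * alphaNI (n₁, n₂, n₃, n₄) i * Real.sqrt x
              - 2 * π * betaSum M₁ M₂ ℓ₁ ℓ₂ i p₁ p₂ p₃ p₄)
      else 0


lemma aux_divisor_bound (δ : ℝ) (hδ : 0 < δ) :
    ∃ K : ℝ, 1 ≤ K ∧ ∀ n : ℕ, 0 < n → ((Nat.divisors n).card : ℝ) ≤ K * (n : ℝ) ^ δ := by
  have hl : 0 < Real.log 2 := Real.log_pos (by norm_num)
  set A : ℝ := 1 + 1 / (δ * Real.log 2) with hA
  have hA1 : 1 ≤ A := by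
    have : 0 < 1 / (δ * Real.log 2) := by positivity
    linarith
  have hk : ∀ (p k : ℕ), 2 ≤ p → ((k : ℝ) + 1) ≤ A * (p : ℝ) ^ (δ * k) := by
    intro p k hp
    have h2p : (2 : ℝ) ≤ p := by exact_mod_cast hp
    have h1 : (2 : ℝ) ^ (δ * k) ≤ (p : ℝ) ^ (δ * k) :=
      Real.rpow_le_rpow (by norm_num) h2p (by positivity)
    have h2 : 1 + δ * k * Real.log 2 ≤ (2 : ℝ) ^ (δ * k) := by
      rw [Real.rpow_def_of_pos (by norm_num)]
      have := Real.add_one_le_exp (Real.log 2 * (δ * k))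
      linarith
    have h3 : (k : ℝ) + 1 ≤ A * (1 + δ * k * Real.log 2) := by
      have : A * (1 + δ * k * Real.log 2)
          = 1 + δ * k * Real.log 2 + 1 / (δ * Real.log 2) + k := by
        rw [hA]; field_simp; ring
      rw [this]
      have : 0 < 1 / (δ * Real.log 2) := by positivity
      have : 0 ≤ δ * k * Real.log 2 := by positivity
      linarith
    calc (k : ℝ) + 1 ≤ A * (1 + δ * k * Real.log 2) := h3
      _ ≤ A * (p : ℝ) ^ (δ * k) := by gcongr; linarith
  obtain ⟨P, hP⟩ := exists_nat_ge ((2 : ℝ) ^ (1 / δ))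
  have hk2 : ∀ (p k : ℕ), P ≤ p → ((k : ℝ) + 1) ≤ (p : ℝ) ^ (δ * k) := by
    intro p k hp
    have h2p : (2 : ℝ) ^ (1 / δ) ≤ p := hP.trans (by exact_mod_cast hp)
    have h2 : (2 : ℝ) ≤ (p : ℝ) ^ δ := by
      calc (2 : ℝ) = ((2 : ℝ) ^ (1 / δ)) ^ δ := by
            rw [← Real.rpow_mul (by norm_num)]; field_simp; simp
        _ ≤ _ := Real.rpow_le_rpow (by positivity) h2p hδ.le
    rw [Real.rpow_mul (by positivity), Real.rpow_natCast]
    calc (k : ℝ) + 1 ≤ (2 : ℝ) ^ k := by exact_mod_cast Nat.lt_two_pow_self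
      _ ≤ _ := by gcongr
  refine ⟨A ^ P, one_le_pow₀ hA1, fun n hn => ?_⟩
  rw [Nat.card_divisors hn.ne']
  have hnp : (n : ℝ) ^ δ = ∏ p ∈ n.primeFactors, (p : ℝ) ^ (δ * (n.factorization p : ℕ)) := by
    conv_lhs => rw [← Nat.prod_factorization_pow_eq_self hn.ne', Finsupp.prod]
    push_cast
    rw [← Real.finsetProd_rpow _ _ (fun i _ => by positivity)]
    refine Finset.prod_congr (by simp) fun p _ => ?_
    rw [mul_comm, Real.rpow_mul (by positivity), Real.rpow_natCast]
  rw [hnp]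
  push_cast
  calc ∏ p ∈ n.primeFactors, ((n.factorization p : ℝ) + 1)
      ≤ ∏ p ∈ n.primeFactors, ((if p < P then A else 1) *
          (p : ℝ) ^ (δ * (n.factorization p : ℕ))) := by
        refine Finset.prod_le_prod (fun i _ => by positivity) fun p hp => ?_
        split_ifs with h
        · exact hk p _ (Nat.prime_of_mem_primeFactors hp).two_le
        · rw [one_mul]; exact hk2 p _ (not_lt.mp h)
    _ = (∏ p ∈ n.primeFactors, (if p < P then A else 1)) *
        ∏ p ∈ n.primeFactors, (p : ℝ) ^ (δ * (n.factorization p : ℕ)) :=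
        Finset.prod_mul_distrib
    _ ≤ _ := by
        refine mul_le_mul_of_nonneg_right ?_ (Finset.prod_nonneg fun i _ => by positivity)
        rw [Finset.prod_ite, Finset.prod_const, Finset.prod_const_one, mul_one]
        refine pow_le_pow_right₀ hA1 ?_
        calc _ ≤ (Finset.range P).card := Finset.card_le_card (by
              intro p hp; simp at hp ⊢; exact hp.2)
          _ = P := by simp

lemma aux_pair (n₁ n₂ n₃ n₄ : ℕ) (e₂ e₃ e₄ : ℝ) (h₂ : e₂ ^ 2 = 1) (h₃ : e₃ ^ 2 = 1)
    (h₄ : e₄ ^ 2 = 1)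
    (h : Real.sqrt n₁ + e₂ * Real.sqrt n₂ + e₃ * Real.sqrt n₃ + e₄ * Real.sqrt n₄ = 0) :
    (n₁ = n₃ ∧ n₂ = n₄) ∨ (n₁ = n₄ ∧ n₂ = n₃) ∨ IsSquare (n₁ * n₂) := by
  have s1 : Real.sqrt n₁ ^ 2 = n₁ := Real.sq_sqrt (by positivity)
  have s2 : Real.sqrt n₂ ^ 2 = n₂ := Real.sq_sqrt (by positivity)
  have s3 : Real.sqrt n₃ ^ 2 = n₃ := Real.sq_sqrt (by positivity)
  have s4 : Real.sqrt n₄ ^ 2 = n₄ := Real.sq_sqrt (by positivity)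
  set x₁ := Real.sqrt n₁
  set x₂ := Real.sqrt n₂
  set x₃ := Real.sqrt n₃
  set x₄ := Real.sqrt n₄
  have hsq : (x₁ + e₂ * x₂) ^ 2 = (e₃ * x₃ + e₄ * x₄) ^ 2 := by
    have : x₁ + e₂ * x₂ = -(e₃ * x₃ + e₄ * x₄) := by linarith
    rw [this]; ring
  obtain ⟨c, hc⟩ : ∃ c : ℤ, c = (n₃ : ℤ) + n₄ - n₁ - n₂ := ⟨_, rfl⟩
  have hcR : (c : ℝ) = (n₃ : ℝ) + n₄ - n₁ - n₂ := by rw [hc]; push_cast; ring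
  have h1 : 2 * e₂ * (x₁ * x₂) - c = 2 * e₃ * e₄ * (x₃ * x₄) := by
    rw [hcR, ← s1, ← s2, ← s3, ← s4]
    linear_combination hsq - x₂ ^ 2 * h₂ + x₃ ^ 2 * h₃ + x₄ ^ 2 * h₄
  have h2 : 4 * ((n₁ : ℝ) * n₂) - 4 * c * e₂ * (x₁ * x₂) + c ^ 2 = 4 * ((n₃ : ℝ) * n₄) := by
    have h3 : (2 * e₂ * (x₁ * x₂) - c) ^ 2 = (2 * e₃ * e₄ * (x₃ * x₄)) ^ 2 := by rw [h1]
    have e1 : (2 * e₂ * (x₁ * x₂) - c) ^ 2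
        = 4 * (e₂ ^ 2 * (x₁ ^ 2 * x₂ ^ 2)) - 4 * c * e₂ * (x₁ * x₂) + c ^ 2 := by ring
    have e2 : (2 * e₃ * e₄ * (x₃ * x₄)) ^ 2 = 4 * (e₃ ^ 2 * e₄ ^ 2 * (x₃ ^ 2 * x₄ ^ 2)) := by ring
    rw [e1, e2, h₂, h₃, h₄, s1, s2, s3, s4] at h3
    linarith
  by_cases hc0 : c = 0
  · have hsum : (n₁ : ℤ) + n₂ = n₃ + n₄ := by linarith
    have hprod : (n₁ : ℤ) * n₂ = n₃ * n₄ := by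
      rw [hc0] at h2
      have : (n₁ : ℝ) * n₂ = n₃ * n₄ := by push_cast at h2; linarith
      exact_mod_cast this
    have : ((n₁ : ℤ) - n₃) * (n₁ - n₄) = 0 := by
      linear_combination n₁ * hsum - hprod
    rcases mul_eq_zero.mp this with h | h
    · left; omega
    · right; left; omega
  · right; right
    have hcR0 : (c : ℝ) ≠ 0 := by exact_mod_cast hc0
    have hx : 4 * c * e₂ * (x₁ * x₂) = 4 * ((n₁ : ℝ) * n₂) + c ^ 2 - 4 * ((n₃ : ℝ) * n₄) := by
      linarith
    have hq : (n₁ : ℝ) * n₂ =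
        ((4 * ((n₁ : ℝ) * n₂) + c ^ 2 - 4 * ((n₃ : ℝ) * n₄)) / (4 * c)) ^ 2 := by
      rw [← hx]
      have : (4 * c * e₂ * (x₁ * x₂) / (4 * c)) ^ 2 = e₂ ^ 2 * (x₁ ^ 2 * x₂ ^ 2) := by
        field_simp
      rw [this, h₂, s1, s2, one_mul]
    have hq' : (((n₁ * n₂ : ℕ)) : ℚ) =
        ((4 * ((n₁ : ℚ) * n₂) + c ^ 2 - 4 * ((n₃ : ℚ) * n₄)) / (4 * c)) ^ 2 := by
      have := hq
      exact_mod_cast this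
    rw [← Rat.isSquare_natCast_iff, hq']
    exact IsSquare.sq _

/-- The candidate set containing all solutions. -/
def auxD : Set (ℕ × ℕ × ℕ × ℕ) :=
  Set.range (fun p : ℕ × ℕ => (p.1, p.1, p.2, p.2)) ∪
  (Set.range (fun p : ℕ × ℕ => (p.1, p.2, p.1, p.2)) ∪
  (Set.range (fun p : ℕ × ℕ => (p.1, p.2, p.2, p.1)) ∪
  Set.range (fun p : ℕ × ℕ × ℕ × ℕ × ℕ => (p.2.1 ^ 2 * p.1, p.2.2.1 ^ 2 * p.1,
    p.2.2.2.1 ^ 2 * p.1, p.2.2.2.2 ^ 2 * p.1))))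

lemma aux_sqf (m b n : ℕ) (hm : Squarefree m) (hb : 0 < b) (h : IsSquare (b ^ 2 * m * n)) :
    ∃ t, t ^ 2 * m = n := by
  obtain ⟨r, hr⟩ := h
  have h1 : b ^ 2 ∣ r ^ 2 := ⟨m * n, by rw [sq r, ← hr]; ring⟩
  obtain ⟨s, rfl⟩ := (Nat.pow_dvd_pow_iff (by norm_num)).mp h1
  have h2 : m * n = s ^ 2 := by
    have : b ^ 2 * (m * n) = b ^ 2 * s ^ 2 := by linarith
    exact Nat.eq_of_mul_eq_mul_left (by positivity) this
  have h3 : m ∣ s := (hm.dvd_pow_iff_dvd two_ne_zero).mp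
    ⟨n, h2.symm⟩
  obtain ⟨t, rfl⟩ := h3
  refine ⟨t, ?_⟩
  have hm0 : 0 < m := Nat.pos_of_ne_zero hm.ne_zero
  have : m * (t ^ 2 * m) = m * n := by rw [h2]; ring
  exact Nat.eq_of_mul_eq_mul_left hm0 this

lemma aux_mem_D (q : ℕ × ℕ × ℕ × ℕ) (e₂ e₃ e₄ : ℝ) (h₂ : e₂ ^ 2 = 1) (h₃ : e₃ ^ 2 = 1)
    (h₄ : e₄ ^ 2 = 1) (hq : 0 < q.1)
    (h : Real.sqrt q.1 + e₂ * Real.sqrt q.2.1 + e₃ * Real.sqrt q.2.2.1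
      + e₄ * Real.sqrt q.2.2.2 = 0) : q ∈ auxD := by
  obtain ⟨n₁, n₂, n₃, n₄⟩ := q
  simp only at h hq
  by_cases hd : (n₁ = n₂ ∧ n₃ = n₄) ∨ (n₁ = n₃ ∧ n₂ = n₄) ∨ (n₁ = n₄ ∧ n₂ = n₃)
  · rcases hd with ⟨rfl, rfl⟩ | ⟨rfl, rfl⟩ | ⟨rfl, rfl⟩
    · exact Or.inl ⟨(n₁, n₃), rfl⟩
    · exact Or.inr (Or.inl ⟨(n₁, n₂), rfl⟩)
    · exact Or.inr (Or.inr (Or.inl ⟨(n₁, n₂), rfl⟩))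
  · have a2 := aux_pair n₁ n₂ n₃ n₄ e₂ e₃ e₄ h₂ h₃ h₄ h
    have a3 := aux_pair n₁ n₃ n₂ n₄ e₃ e₂ e₄ h₃ h₂ h₄ (by linarith)
    have a4 := aux_pair n₁ n₄ n₂ n₃ e₄ e₂ e₃ h₄ h₂ h₃ (by linarith)
    have b2 : IsSquare (n₁ * n₂) := by
      rcases a2 with a | a | a
      · exact absurd (by tauto) hd
      · exact absurd (by tauto) hd
      · exact a
    have b3 : IsSquare (n₁ * n₃) := by
      rcases a3 with a | a | a
      · exact absurd (by tauto) hd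
      · exact absurd (Or.inr (Or.inr ⟨a.1, a.2.symm⟩)) hd
      · exact a
    have b4 : IsSquare (n₁ * n₄) := by
      rcases a4 with a | a | a
      · exact absurd (Or.inl ⟨a.1, a.2.symm⟩) hd
      · exact absurd (Or.inr (Or.inl ⟨a.1, a.2.symm⟩)) hd
      · exact a
    obtain ⟨m, b, hmb, hm⟩ := Nat.sq_mul_squarefree n₁
    have hb : 0 < b := by
      rcases Nat.eq_zero_or_pos b with rfl | hb
      · simp at hmb; omega
      · exact hb
    rw [← hmb] at b2 b3 b4
    obtain ⟨t2, ht2⟩ := aux_sqf m b n₂ hm hb b2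
    obtain ⟨t3, ht3⟩ := aux_sqf m b n₃ hm hb b3
    obtain ⟨t4, ht4⟩ := aux_sqf m b n₄ hm hb b4
    exact Or.inr (Or.inr (Or.inr ⟨(m, b, t2, t3, t4), by simp [hmb, ht2, ht3, ht4]⟩))

/-- The dominating weight. -/
def auxG (q : ℕ × ℕ × ℕ × ℕ) : ℝ :=
  ((q.1 : ℝ) * q.2.1 * q.2.2.1 * q.2.2.2) ^ (-(13:ℝ)/24)

lemma auxG_nonneg (q : ℕ × ℕ × ℕ × ℕ) : 0 ≤ auxG q := by unfold auxG; positivity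

lemma aux_range {α : Type*} (f : α → ℕ × ℕ × ℕ × ℕ) (h : Summable (fun a => auxG (f a))) :
    Summable ((Set.range f).indicator auxG) := by
  rw [← summable_subtype_iff_indicator]
  have := h.comp_injective (Set.rangeSplitting_injective f)
  refine this.congr fun b => ?_
  simp [Function.comp, Set.apply_rangeSplitting]

lemma aux_indicator_union {s t : Set (ℕ × ℕ × ℕ × ℕ)} (hs : Summable (s.indicator auxG))
    (ht : Summable (t.indicator auxG)) : Summable ((s ∪ t).indicator auxG) := by
  refine Summable.of_nonneg_of_le (fun q => Set.indicator_nonneg (fun q _ => auxG_nonneg q) q)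
    (fun q => ?_) (hs.add ht)
  have := auxG_nonneg q
  by_cases h1 : q ∈ s <;> by_cases h2 : q ∈ t <;> simp [h1, h2, this]

lemma auxG_summable : Summable (auxD.indicator auxG) := by
  have S1 : Summable (fun n : ℕ => (n : ℝ) ^ (-(13:ℝ)/12)) :=
    Real.summable_nat_rpow.mpr (by norm_num)
  have S2 : Summable (fun n : ℕ => (n : ℝ) ^ (-(13:ℝ)/6)) :=
    Real.summable_nat_rpow.mpr (by norm_num)
  have n1 : 0 ≤ (fun n : ℕ => (n : ℝ) ^ (-(13:ℝ)/12)) := fun n => by positivity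
  have n2 : 0 ≤ (fun n : ℕ => (n : ℝ) ^ (-(13:ℝ)/6)) := fun n => by positivity
  have hsq : ∀ a : ℝ, 0 ≤ a → a ^ (-(13:ℝ)/12) = (a ^ 2) ^ (-(13:ℝ)/24) := fun a ha => by
    rw [← Real.rpow_natCast, ← Real.rpow_mul ha]; norm_num
  have hq : ∀ a : ℝ, 0 ≤ a → a ^ (-(13:ℝ)/6) = (a ^ 4) ^ (-(13:ℝ)/24) := fun a ha => by
    rw [← Real.rpow_natCast, ← Real.rpow_mul ha]; norm_num
  have P2 := S1.mul_of_nonneg S1 n1 n1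
  have P3 := S1.mul_of_nonneg P2 n1 (fun p => by dsimp; positivity)
  have P4 := S1.mul_of_nonneg P3 n1 (fun p => by dsimp; positivity)
  have P5 := S2.mul_of_nonneg P4 n2 (fun p => by dsimp; positivity)
  have D2 : ∀ a b : ℕ, ((a : ℝ) ^ 2 * (b : ℝ) ^ 2) ^ (-(13:ℝ)/24) =
      (a : ℝ) ^ (-(13:ℝ)/12) * (b : ℝ) ^ (-(13:ℝ)/12) := fun a b => by
    rw [hsq _ (by positivity), hsq _ (by positivity), Real.mul_rpow (by positivity) (by positivity)]
  refine aux_indicator_union (aux_range _ ?_) (aux_indicator_union (aux_range _ ?_)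
    (aux_indicator_union (aux_range _ ?_) (aux_range _ ?_)))
  · refine P2.congr fun p => ?_
    rw [← D2, auxG]; congr 1; ring
  · refine P2.congr fun p => ?_
    rw [← D2, auxG]; congr 1; ring
  · refine P2.congr fun p => ?_
    rw [← D2, auxG]; congr 1; ring
  · refine P5.congr fun p => ?_
    rw [auxG, hq _ (by positivity), hsq _ (by positivity), hsq _ (by positivity),
      hsq _ (by positivity), hsq _ (by positivity),
      ← Real.mul_rpow (by positivity) (by positivity),
      ← Real.mul_rpow (by positivity) (by positivity),
      ← Real.mul_rpow (by positivity) (by positivity),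
      ← Real.mul_rpow (by positivity) (by positivity)]
    congr 1; push_cast; ring

/-- The summand of `s4`. -/
def auxTerm (M₁ M₂ ℓ₁ ℓ₂ : ℕ) (e₂ e₃ e₄ : ℝ) (q : ℕ × ℕ × ℕ × ℕ) : ℝ :=
    if 0 < q.1 ∧ 0 < q.2.1 ∧ 0 < q.2.2.1 ∧ 0 < q.2.2.2 ∧
        Real.sqrt q.1 + e₂ * Real.sqrt q.2.1 + e₃ * Real.sqrt q.2.2.1
          + e₄ * Real.sqrt q.2.2.2 = 0 then
      ((q.1 : ℝ) * q.2.1 * q.2.2.1 * q.2.2.2) ^ (-(3:ℝ)/4) *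
        ∑ p₁ ∈ Nat.divisorsAntidiagonal q.1, ∑ p₂ ∈ Nat.divisorsAntidiagonal q.2.1,
        ∑ p₃ ∈ Nat.divisorsAntidiagonal q.2.2.1, ∑ p₄ ∈ Nat.divisorsAntidiagonal q.2.2.2,
          Real.cos (2 * π * (phase M₁ M₂ ℓ₁ ℓ₂ p₁ + e₂ * phase M₁ M₂ ℓ₁ ℓ₂ p₂
            + e₃ * phase M₁ M₂ ℓ₁ ℓ₂ p₃ + e₄ * phase M₁ M₂ ℓ₁ ℓ₂ p₄))
    else 0

lemma s4_eq (M₁ M₂ ℓ₁ ℓ₂ : ℕ) (e₂ e₃ e₄ : ℝ) :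
    s4 M₁ M₂ ℓ₁ ℓ₂ e₂ e₃ e₄ = ∑' q, auxTerm M₁ M₂ ℓ₁ ℓ₂ e₂ e₃ e₄ q := rfl

lemma s4_swap34 (M₁ M₂ ℓ₁ ℓ₂ : ℕ) (e₂ e₃ e₄ : ℝ) :
    s4 M₁ M₂ ℓ₁ ℓ₂ e₂ e₃ e₄ = s4 M₁ M₂ ℓ₁ ℓ₂ e₂ e₄ e₃ := by
  let E : ℕ × ℕ × ℕ × ℕ ≃ ℕ × ℕ × ℕ × ℕ :=
    ⟨fun q => (q.1, q.2.1, q.2.2.2, q.2.2.1), fun q => (q.1, q.2.1, q.2.2.2, q.2.2.1),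
      fun _ => rfl, fun _ => rfl⟩
  rw [s4_eq, s4_eq, ← E.tsum_eq]
  refine tsum_congr fun q => ?_
  unfold auxTerm
  refine if_congr ?_ ?_ rfl
  · simp only [E, Equiv.coe_fn_mk]
    constructor
    · rintro ⟨a, b, c, d, e⟩; exact ⟨a, b, d, c, by linarith⟩
    · rintro ⟨a, b, c, d, e⟩; exact ⟨a, b, d, c, by linarith⟩
  · simp only [E, Equiv.coe_fn_mk]
    congr 1
    · congr 1; ring
    · refine Finset.sum_congr rfl fun p₁ _ => Finset.sum_congr rfl fun p₂ _ => ?_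
      rw [Finset.sum_comm]
      refine Finset.sum_congr rfl fun p₃ _ => Finset.sum_congr rfl fun p₄ _ => ?_
      congr 1; ring

lemma s4_swap23 (M₁ M₂ ℓ₁ ℓ₂ : ℕ) (e₂ e₃ e₄ : ℝ) :
    s4 M₁ M₂ ℓ₁ ℓ₂ e₂ e₃ e₄ = s4 M₁ M₂ ℓ₁ ℓ₂ e₃ e₂ e₄ := by
  let E : ℕ × ℕ × ℕ × ℕ ≃ ℕ × ℕ × ℕ × ℕ :=
    ⟨fun q => (q.1, q.2.2.1, q.2.1, q.2.2.2), fun q => (q.1, q.2.2.1, q.2.1, q.2.2.2),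
      fun _ => rfl, fun _ => rfl⟩
  rw [s4_eq, s4_eq, ← E.tsum_eq]
  refine tsum_congr fun q => ?_
  unfold auxTerm
  refine if_congr ?_ ?_ rfl
  · simp only [E, Equiv.coe_fn_mk]
    constructor
    · rintro ⟨a, b, c, d, e⟩; exact ⟨a, c, b, d, by linarith⟩
    · rintro ⟨a, b, c, d, e⟩; exact ⟨a, c, b, d, by linarith⟩
  · simp only [E, Equiv.coe_fn_mk]
    congr 1
    · congr 1; ring
    · refine Finset.sum_congr rfl fun p₁ _ => ?_
      rw [Finset.sum_comm]
      refine Finset.sum_congr rfl fun p₂ _ => Finset.sum_congr rfl fun p₃ _ => 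
        Finset.sum_congr rfl fun p₄ _ => ?_
      congr 1; ring

lemma s4_pos (M₁ M₂ ℓ₁ ℓ₂ : ℕ) : s4 M₁ M₂ ℓ₁ ℓ₂ 1 1 1 = 0 := by
  rw [s4_eq]
  convert tsum_zero with q
  unfold auxTerm
  rw [if_neg]
  rintro ⟨a, -, -, -, e⟩
  have h1 : 0 < Real.sqrt q.1 := Real.sqrt_pos.mpr (by exact_mod_cast a)
  have h2 := Real.sqrt_nonneg (q.2.1 : ℝ)
  have h3 := Real.sqrt_nonneg (q.2.2.1 : ℝ)
  have h4 := Real.sqrt_nonneg (q.2.2.2 : ℝ)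
  linarith

lemma aux_sum_le {α : Type*} (s : Finset α) (f : α → ℝ) (B : ℝ) (h : ∀ a ∈ s, |f a| ≤ B) :
    |∑ a ∈ s, f a| ≤ s.card * B := by
  refine (Finset.abs_sum_le_sum_abs _ _).trans ?_
  refine (Finset.sum_le_card_nsmul s _ B h).trans ?_
  rw [nsmul_eq_mul]

lemma aux_card (n : ℕ) : (Nat.divisorsAntidiagonal n).card = (Nat.divisors n).card := by
  rw [← Nat.map_div_right_divisors, Finset.card_map]

lemma auxTerm_bound : ∃ K : ℝ, 1 ≤ K ∧ ∀ (M₁ M₂ ℓ₁ ℓ₂ : ℕ) (e₂ e₃ e₄ : ℝ),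
    e₂ ^ 2 = 1 → e₃ ^ 2 = 1 → e₄ ^ 2 = 1 → ∀ (q : ℕ × ℕ × ℕ × ℕ) (y : ℝ), 1 ≤ y →
    (q ∉ (Finset.Icc 1 ⌊y⌋₊ ×ˢ Finset.Icc 1 ⌊y⌋₊ ×ˢ Finset.Icc 1 ⌊y⌋₊ ×ˢ Finset.Icc 1 ⌊y⌋₊ :
      Finset (ℕ × ℕ × ℕ × ℕ)) ∨ y = 1) →
    |auxTerm M₁ M₂ ℓ₁ ℓ₂ e₂ e₃ e₄ q| ≤ K * y ^ (-(1:ℝ)/6) * auxD.indicator auxG q := by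
  obtain ⟨K, hK, hd⟩ := aux_divisor_bound (1/24) (by norm_num)
  refine ⟨K ^ 4, one_le_pow₀ hK, ?_⟩
  intro M₁ M₂ ℓ₁ ℓ₂ e₂ e₃ e₄ h₂ h₃ h₄ q y hy hq
  have hind : 0 ≤ auxD.indicator auxG q := Set.indicator_nonneg (fun q _ => auxG_nonneg q) q
  unfold auxTerm
  split_ifs with hs
  swap
  · rw [abs_zero]; positivity
  obtain ⟨a, b, c, d, e⟩ := hs
  rw [Set.indicator_of_mem (aux_mem_D q e₂ e₃ e₄ h₂ h₃ h₄ a e)]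
  obtain ⟨n₁, n₂, n₃, n₄⟩ := q
  simp only at a b c d e ⊢
  have one_le_a : (1:ℝ) ≤ n₁ := by exact_mod_cast a
  have one_le_b : (1:ℝ) ≤ n₂ := by exact_mod_cast b
  have one_le_c : (1:ℝ) ≤ n₃ := by exact_mod_cast c
  have one_le_d : (1:ℝ) ≤ n₄ := by exact_mod_cast d
  have hP : 0 < (n₁ : ℝ) * n₂ * n₃ * n₄ := by positivity
  have hyP : y ≤ (n₁ : ℝ) * n₂ * n₃ * n₄ := by
    have k12 : (1:ℝ) ≤ n₁ * n₂ := one_le_mul_of_one_le_of_one_le one_le_a one_le_b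
    have k34 : (1:ℝ) ≤ n₃ * n₄ := one_le_mul_of_one_le_of_one_le one_le_c one_le_d
    have kk : (n₁ : ℝ) * n₂ * n₃ * n₄ = (n₁ * n₂) * (n₃ * n₄) := by ring
    rcases hq with hq | rfl
    · have : y < n₁ ∨ y < n₂ ∨ y < n₃ ∨ y < n₄ := by
        by_contra! hcon
        apply hq
        simp only [Finset.mem_product, Finset.mem_Icc]
        have hl : ∀ n : ℕ, (n : ℝ) ≤ y → n ≤ ⌊y⌋₊ := fun n hn => Nat.le_floor hn
        exact ⟨⟨a, hl _ hcon.1⟩, ⟨b, hl _ hcon.2.1⟩, ⟨c, hl _ hcon.2.2.1⟩, ⟨d, hl _ hcon.2.2.2⟩⟩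
      rw [kk]
      rcases this with h | h | h | h
      · have : (n₁ : ℝ) ≤ n₁ * n₂ := le_mul_of_one_le_right (by positivity) one_le_b
        have : (n₁ : ℝ) * n₂ ≤ n₁ * n₂ * (n₃ * n₄) := le_mul_of_one_le_right (by positivity) k34
        linarith
      · have : (n₂ : ℝ) ≤ n₁ * n₂ := le_mul_of_one_le_left (by positivity) one_le_a
        have : (n₁ : ℝ) * n₂ ≤ n₁ * n₂ * (n₃ * n₄) := le_mul_of_one_le_right (by positivity) k34
        linarith
      · have : (n₃ : ℝ) ≤ n₃ * n₄ := le_mul_of_one_le_right (by positivity) one_le_d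
        have : (n₃ : ℝ) * n₄ ≤ n₁ * n₂ * (n₃ * n₄) := le_mul_of_one_le_left (by positivity) k12
        linarith
      · have : (n₄ : ℝ) ≤ n₃ * n₄ := le_mul_of_one_le_left (by positivity) one_le_c
        have : (n₃ : ℝ) * n₄ ≤ n₁ * n₂ * (n₃ * n₄) := le_mul_of_one_le_left (by positivity) k12
        linarith
    · rw [kk]; exact one_le_mul_of_one_le_of_one_le k12 k34
  rw [abs_mul, abs_of_nonneg (by positivity), auxG]
  simp only
  have hsum : |∑ p₁ ∈ Nat.divisorsAntidiagonal n₁, ∑ p₂ ∈ Nat.divisorsAntidiagonal n₂,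
        ∑ p₃ ∈ Nat.divisorsAntidiagonal n₃, ∑ p₄ ∈ Nat.divisorsAntidiagonal n₄,
          Real.cos (2 * π * (phase M₁ M₂ ℓ₁ ℓ₂ p₁ + e₂ * phase M₁ M₂ ℓ₁ ℓ₂ p₂
            + e₃ * phase M₁ M₂ ℓ₁ ℓ₂ p₃ + e₄ * phase M₁ M₂ ℓ₁ ℓ₂ p₄))|
      ≤ (n₁.divisors.card : ℝ) * (n₂.divisors.card * (n₃.divisors.card *
        (n₄.divisors.card * 1))) := by
    simp only [← aux_card]
    exact aux_sum_le _ _ _ fun p₁ _ => aux_sum_le _ _ _ fun p₂ _ => aux_sum_le _ _ _ fun p₃ _ =>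
      aux_sum_le _ _ _ fun p₄ _ => Real.abs_cos_le_one _
  have hdd : (n₁.divisors.card : ℝ) * (n₂.divisors.card * (n₃.divisors.card *
        (n₄.divisors.card * 1))) ≤ K ^ 4 * ((n₁ : ℝ) * n₂ * n₃ * n₄) ^ (1/24 : ℝ) := by
    rw [Real.mul_rpow (by positivity) (by positivity), Real.mul_rpow (by positivity) (by positivity),
      Real.mul_rpow (by positivity) (by positivity)]
    calc _ ≤ (K * (n₁ : ℝ) ^ (1/24 : ℝ)) * ((K * (n₂ : ℝ) ^ (1/24 : ℝ)) *
          ((K * (n₃ : ℝ) ^ (1/24 : ℝ)) * ((K * (n₄ : ℝ) ^ (1/24 : ℝ)) * 1))) := by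
          have := hd n₁ a
          have := hd n₂ b
          have := hd n₃ c
          have := hd n₄ d
          gcongr
      _ = _ := by ring
  set P := (n₁ : ℝ) * n₂ * n₃ * n₄
  calc _ ≤ P ^ (-(3:ℝ)/4) * (K ^ 4 * P ^ (1/24 : ℝ)) := by
        gcongr; exact hsum.trans hdd
    _ = K ^ 4 * P ^ (-(1:ℝ)/6) * P ^ (-(13:ℝ)/24) := by
        have h1 : P ^ (-(3:ℝ)/4) * P ^ (1/24 : ℝ) = P ^ (-(1:ℝ)/6) * P ^ (-(13:ℝ)/24) := by
          rw [← Real.rpow_add hP, ← Real.rpow_add hP]; norm_num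
        linear_combination K ^ 4 * h1
    _ ≤ _ := by
        have : P ^ (-(1:ℝ)/6) ≤ y ^ (-(1:ℝ)/6) :=
          Real.rpow_le_rpow_of_nonpos (by linarith) hyP (by norm_num)
        gcongr

lemma aux_trunc : ∃ K : ℝ, 0 ≤ K ∧ ∀ (M₁ M₂ ℓ₁ ℓ₂ : ℕ) (e₂ e₃ e₄ : ℝ),
    e₂ ^ 2 = 1 → e₃ ^ 2 = 1 → e₄ ^ 2 = 1 → ∀ (y : ℝ), 1 ≤ y →
    |(∑ q ∈ (Finset.Icc 1 ⌊y⌋₊ ×ˢ Finset.Icc 1 ⌊y⌋₊ ×ˢ Finset.Icc 1 ⌊y⌋₊ ×ˢ Finset.Icc 1 ⌊y⌋₊ :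
      Finset (ℕ × ℕ × ℕ × ℕ)), auxTerm M₁ M₂ ℓ₁ ℓ₂ e₂ e₃ e₄ q) - s4 M₁ M₂ ℓ₁ ℓ₂ e₂ e₃ e₄|
      ≤ K * y ^ (-(1:ℝ)/6) := by
  obtain ⟨K, hK, hb⟩ := auxTerm_bound
  have hG0 : 0 ≤ ∑' q, auxD.indicator auxG q :=
    tsum_nonneg fun q => Set.indicator_nonneg (fun q _ => auxG_nonneg q) q
  refine ⟨K * ∑' q, auxD.indicator auxG q, by positivity, ?_⟩
  intro M₁ M₂ ℓ₁ ℓ₂ e₂ e₃ e₄ h₂ h₃ h₄ y hy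
  set B := (Finset.Icc 1 ⌊y⌋₊ ×ˢ Finset.Icc 1 ⌊y⌋₊ ×ˢ Finset.Icc 1 ⌊y⌋₊ ×ˢ Finset.Icc 1 ⌊y⌋₊ :
      Finset (ℕ × ℕ × ℕ × ℕ)) with hB
  have hsum : Summable (auxTerm M₁ M₂ ℓ₁ ℓ₂ e₂ e₃ e₄) := by
    refine Summable.of_norm_bounded (auxG_summable.mul_left (K * (1:ℝ) ^ (-(1:ℝ)/6))) fun q => ?_
    exact hb M₁ M₂ ℓ₁ ℓ₂ e₂ e₃ e₄ h₂ h₃ h₄ q 1 le_rfl (Or.inr rfl)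
  have h1 : ∑ q ∈ B, auxTerm M₁ M₂ ℓ₁ ℓ₂ e₂ e₃ e₄ q =
      ∑' q, (if q ∈ B then auxTerm M₁ M₂ ℓ₁ ℓ₂ e₂ e₃ e₄ q else 0) := by
    rw [tsum_eq_sum (s := B) (fun q hq => by simp [hq])]
    exact Finset.sum_congr rfl fun q hq => by simp [hq]
  have hs2 : Summable (fun q => if q ∈ B then auxTerm M₁ M₂ ℓ₁ ℓ₂ e₂ e₃ e₄ q else 0) :=
    summable_of_ne_finset_zero (s := B) (fun q hq => by simp [hq])
  rw [h1, s4_eq, ← hs2.tsum_sub hsum, ← Real.norm_eq_abs]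
  have hG := auxG_summable.hasSum.mul_left (K * y ^ (-(1:ℝ)/6))
  refine (tsum_of_norm_bounded hG fun q => ?_).trans (le_of_eq (by ring))
  by_cases hq : q ∈ B
  · have : 0 ≤ auxD.indicator auxG q := Set.indicator_nonneg (fun q _ => auxG_nonneg q) q
    simp only [hq, if_true, sub_self, norm_zero]
    positivity
  · simp only [hq, if_false, zero_sub, norm_neg, Real.norm_eq_abs]
    exact hb M₁ M₂ ℓ₁ ℓ₂ e₂ e₃ e₄ h₂ h₃ h₄ q y hy (Or.inl hq)

lemma aux_S1 (M₁ M₂ ℓ₁ ℓ₂ : ℕ) (y x : ℝ) : S1 M₁ M₂ ℓ₁ ℓ₂ y x =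
    x / (32 * π ^ 4) * ∑ i : Fin 2 × Fin 2 × Fin 2,
    ∑ q ∈ (Finset.Icc 1 ⌊y⌋₊ ×ˢ Finset.Icc 1 ⌊y⌋₊ ×ˢ Finset.Icc 1 ⌊y⌋₊ ×ˢ Finset.Icc 1 ⌊y⌋₊ :
      Finset (ℕ × ℕ × ℕ × ℕ)), auxTerm M₁ M₂ ℓ₁ ℓ₂ ((-1) ^ (i.1 : ℕ)) ((-1) ^ (i.2.1 : ℕ))
        ((-1) ^ (i.2.2 : ℕ)) q := by
  unfold S1
  congr 1
  refine Finset.sum_congr rfl fun i _ => ?_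
  rw [Finset.sum_product]
  refine Finset.sum_congr rfl fun n₁ h₁ => ?_
  rw [Finset.sum_product]
  refine Finset.sum_congr rfl fun n₂ h₂ => ?_
  rw [Finset.sum_product]
  refine Finset.sum_congr rfl fun n₃ h₃ => Finset.sum_congr rfl fun n₄ h₄ => ?_
  unfold auxTerm
  refine if_congr ?_ rfl rfl
  simp only [Finset.mem_Icc] at h₁ h₂ h₃ h₄
  unfold alphaNI
  constructor
  · intro h; exact ⟨h₁.1, h₂.1, h₃.1, h₄.1, h⟩
  · intro h; exact h.2.2.2.2

lemma aux_C4 (M₁ M₂ ℓ₁ ℓ₂ : ℕ) : C4 M₁ M₂ ℓ₁ ℓ₂ = ∑ i : Fin 2 × Fin 2 × Fin 2,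
    s4 M₁ M₂ ℓ₁ ℓ₂ ((-1) ^ (i.1 : ℕ)) ((-1) ^ (i.2.1 : ℕ)) ((-1) ^ (i.2.2 : ℕ)) := by
  simp only [Fintype.sum_prod_type, Fin.sum_univ_two, Fin.val_zero, Fin.val_one, pow_zero, pow_one]
  rw [s4_pos, s4_swap34 _ _ _ _ 1 (-1) 1, s4_swap23 _ _ _ _ (-1) 1 1,
    s4_swap34 _ _ _ _ 1 (-1) 1, s4_swap23 _ _ _ _ (-1) 1 (-1), s4_swap34 _ _ _ _ (-1) (-1) 1,
    s4_swap23 _ _ _ _ (-1) 1 (-1), C4]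
  ring

theorem S1_integral_asymptotic
    (M₁ M₂ ℓ₁ ℓ₂ : ℕ) (hM₁ : 0 < M₁) (hM₂ : 0 < M₂)
    (hℓ₁ : 1 ≤ ℓ₁) (hℓ₁' : ℓ₁ ≤ M₁) (hℓ₂ : 1 ≤ ℓ₂) (hℓ₂' : ℓ₂ ≤ M₂)
    (ε : ℝ) (hε : 0 < ε) :
    ∃ C > 0, ∀ T : ℝ, 10 ≤ T →
      |(∫ x in (T/2)..T, S1 M₁ M₂ ℓ₁ ℓ₂ (T ^ ((3:ℝ)/4)) x)
          - 1 / (32 * π ^ 4) * C4 M₁ M₂ ℓ₁ ℓ₂ * ∫ x in (T/2)..T, x|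
        ≤ C * T ^ (2 - 1/8 + ε) := by
  obtain ⟨K, hK, hb⟩ := aux_trunc
  refine ⟨8 * K + 1, by positivity, fun T hT => ?_⟩
  have hT0 : 0 < T := by linarith
  have hT1 : 1 ≤ T := by linarith
  set y := T ^ ((3:ℝ)/4) with hy
  have hy1 : 1 ≤ y := Real.one_le_rpow hT1 (by norm_num)
  set A : ℝ := ∑ i : Fin 2 × Fin 2 × Fin 2,
    ∑ q ∈ (Finset.Icc 1 ⌊y⌋₊ ×ˢ Finset.Icc 1 ⌊y⌋₊ ×ˢ Finset.Icc 1 ⌊y⌋₊ ×ˢ Finset.Icc 1 ⌊y⌋₊ :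
      Finset (ℕ × ℕ × ℕ × ℕ)), auxTerm M₁ M₂ ℓ₁ ℓ₂ ((-1) ^ (i.1 : ℕ)) ((-1) ^ (i.2.1 : ℕ))
        ((-1) ^ (i.2.2 : ℕ)) q with hA
  have hAC : |A - C4 M₁ M₂ ℓ₁ ℓ₂| ≤ 8 * K * y ^ (-(1:ℝ)/6) := by
    rw [hA, aux_C4, ← Finset.sum_sub_distrib]
    refine (aux_sum_le _ _ (K * y ^ (-(1:ℝ)/6)) fun i _ => ?_).trans (le_of_eq ?_)
    · refine hb M₁ M₂ ℓ₁ ℓ₂ _ _ _ ?_ ?_ ?_ y hy1 <;>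
      · rw [← pow_mul, mul_comm, pow_mul]; norm_num
    · simp; ring
  have hyT : y ^ (-(1:ℝ)/6) = T ^ (-(1:ℝ)/8) := by
    rw [hy, ← Real.rpow_mul hT0.le]; norm_num
  have hI : (∫ x in (T/2)..T, S1 M₁ M₂ ℓ₁ ℓ₂ y x)
      = (∫ x in (T/2)..T, x) * (A / (32 * π ^ 4)) := by
    rw [← intervalIntegral.integral_mul_const]
    refine intervalIntegral.integral_congr fun x _ => ?_
    simp only [aux_S1, ← hA]
    ring
  have hint : (∫ x in (T/2)..T, x) = 3 / 8 * T ^ 2 := by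
    rw [integral_id]; ring
  have hpi : 1 ≤ 32 * π ^ 4 := by
    have : 1 ≤ π ^ 4 := one_le_pow₀ (by linarith [Real.pi_gt_three])
    linarith
  have hinv : 1 / (32 * π ^ 4) ≤ 1 := by
    rw [div_le_one (by positivity)]; exact hpi
  rw [hI, hint]
  have hrw : 3 / 8 * T ^ 2 * (A / (32 * π ^ 4)) -
      1 / (32 * π ^ 4) * C4 M₁ M₂ ℓ₁ ℓ₂ * (3 / 8 * T ^ 2)
      = (1 / (32 * π ^ 4)) * (3 / 8 * T ^ 2) * (A - C4 M₁ M₂ ℓ₁ ℓ₂) := by ring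
  rw [hrw, abs_mul, abs_of_nonneg (by positivity)]
  calc 1 / (32 * π ^ 4) * (3 / 8 * T ^ 2) * |A - C4 M₁ M₂ ℓ₁ ℓ₂|
      ≤ 1 * (1 * T ^ 2) * (8 * K * T ^ (-(1:ℝ)/8)) := by
        rw [hyT] at hAC
        gcongr
        norm_num
    _ = 8 * K * T ^ ((2:ℝ) - 1/8) := by
        have : T ^ ((2:ℝ) - 1/8) = T ^ 2 * T ^ (-(1:ℝ)/8) := by
          rw [← Real.rpow_natCast T 2, ← Real.rpow_add hT0]; norm_num
        rw [this]; ring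
    _ ≤ (8 * K + 1) * T ^ ((2:ℝ) - 1/8 + ε) := by
        have : T ^ ((2:ℝ) - 1/8) ≤ T ^ ((2:ℝ) - 1/8 + ε) :=
          Real.rpow_le_rpow_of_exponent_le hT1 (by linarith)
        gcongr
        linarith
end
end
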